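/- arXiv:2407.05028 — 2 statements merged into one kernel-verified Lean document; each statement's English description precedes it below -/
import Mathlib

section
/- Let s and e be composable labelled transition systems and let i_s and i_e be input-enabled transition systems with I_{i_s} = I_s, U_{i_s} = U_s, I_{i_e} = I_e and U_{i_e} = U_e (so i_s and i_e are composable and i_s ∥ i_e has the same input and output labels as s ∥ e). If s mutually accepts e, i_s uioco s, and i_e uioco e, then i_s ∥ i_e uioco s ∥ e. -/
/-- Labels extended with the quiescence label `δ`. -/
inductive ELabel (Lab : Type) : Type
  | lab : Lab → ELabel Lab
  | delta : ELabel Lab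

namespace ELabel

/-- Membership of an extended label in `𝓛^δ = 𝓛 ∪ {δ}`. -/
def inL {Lab : Type} (Ls : Set Lab) : ELabel Lab → Prop
  | lab ℓ => ℓ ∈ Ls
  | delta => True

end ELabel

/-- A trace lies in `(𝓛^δ)*`. -/
def TraceIn {Lab : Type} (Ls : Set Lab) (σ : List (ELabel Lab)) : Prop :=
  ∀ x ∈ σ, ELabel.inL Ls x

/-- A labelled transition system.  `T q none q'` is an internal `τ`-step,
`T q (some ℓ) q'` is a step labelled `ℓ`. -/
structure LTS (Q : Type) (Lab : Type) where
  I : Set Lab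
  U : Set Lab
  T : Q → Option Lab → Q → Prop
  q0 : Q

namespace LTS

variable {Q Lab : Type}

/-- The label set `L = I ∪ U`. -/
def L (M : LTS Q Lab) : Set Lab := M.I ∪ M.U

/-- Standing assumptions on all LTSs: countable, disjoint input/output label
sets, transitions labelled within `L`, strong convergence (no infinite
`τ`-sequences), and image-finiteness. -/
def WellFormed (M : LTS Q Lab) : Prop :=
  M.I.Countable ∧ M.U.Countable ∧ Disjoint M.I M.U ∧
  (∀ q ℓ q', M.T q (some ℓ) q' → ℓ ∈ M.L) ∧
  (¬ ∃ f : ℕ → Q, ∀ n, M.T (f n) none (f (n + 1))) ∧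
  (∀ q a, {q' | M.T q a q'}.Finite)

/-- A state is quiescent if neither an output nor `τ` is enabled in it. -/
def Quiescent (M : LTS Q Lab) (q : Q) : Prop :=
  (∀ x ∈ M.U, ∀ q', ¬ M.T q (some x) q') ∧ ∀ q', ¬ M.T q none q'

/-- A single visible step `q --x--> q'` for `x ∈ L^δ`, where the quiescence
label `δ` gives a self-loop at quiescent states. -/
def VStep (M : LTS Q Lab) (q : Q) : ELabel Lab → Q → Prop
  | .lab ℓ, q' => M.T q (some ℓ) q'
  | .delta, q' => q' = q ∧ M.Quiescent q

/-- Zero or more `τ`-steps: `q ==ε==> q'`. -/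
def Eps (M : LTS Q Lab) : Q → Q → Prop :=
  Relation.ReflTransGen fun a b => M.T a none b

/-- Weak transition `q ==σ==> q'` for `σ ∈ (L^δ)*`. -/
inductive W (M : LTS Q Lab) : Q → List (ELabel Lab) → Q → Prop
  | nil {q q' : Q} : M.Eps q q' → W M q [] q'
  | snoc {q q1 q2 q' : Q} {σ : List (ELabel Lab)} {x : ELabel Lab} :
      W M q σ q1 → M.VStep q1 x q2 → M.Eps q2 q' → W M q (σ ++ [x]) q'

/-- `X after σ`, for a set of states `X`. -/
def afterSet (M : LTS Q Lab) (X : Set Q) (σ : List (ELabel Lab)) : Set Q :=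
  {q' | ∃ q ∈ X, M.W q σ q'}

/-- `M after σ`, from the initial state. -/
def after (M : LTS Q Lab) (σ : List (ELabel Lab)) : Set Q :=
  {q' | M.W M.q0 σ q'}

/-- The predicate underlying `out(q) ⊆ U ∪ {δ}`. -/
def outLabel (M : LTS Q Lab) (q : Q) : ELabel Lab → Prop
  | .lab ℓ => ℓ ∈ M.U ∧ ∃ q', M.T q (some ℓ) q'
  | .delta => M.Quiescent q

/-- `out(q)`. -/
def outq (M : LTS Q Lab) (q : Q) : Set (ELabel Lab) :=
  {x | M.outLabel q x}

/-- `in(q) = {ℓ ∈ I | q ==ℓ==>}`. -/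
def inq (M : LTS Q Lab) (q : Q) : Set Lab :=
  {ℓ | ℓ ∈ M.I ∧ ∃ q', M.W q [ELabel.lab ℓ] q'}

/-- `out(X) = ⋃_{q ∈ X} out(q)`. -/
def outSet (M : LTS Q Lab) (X : Set Q) : Set (ELabel Lab) :=
  ⋃ q ∈ X, M.outq q

/-- `in(X) = ⋂_{q ∈ X} in(q)`. -/
def inSet (M : LTS Q Lab) (X : Set Q) : Set Lab :=
  ⋂ q ∈ X, M.inq q

/-- Input-enabledness: `M` is an IOTS. -/
def InputEnabled (M : LTS Q Lab) : Prop :=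
  ∀ q, ∀ ℓ ∈ M.I, ∃ q', M.W q [ELabel.lab ℓ] q'

/-- `Utraces(M)`. -/
def Utraces (M : LTS Q Lab) : Set (List (ELabel Lab)) :=
  {σ | TraceIn M.L σ ∧ (∃ q', M.W M.q0 σ q') ∧
    ∀ σ1 ℓ σ2, σ = σ1 ++ ELabel.lab ℓ :: σ2 → ℓ ∈ M.I →
      ∀ q, M.W M.q0 σ1 q → ∃ q', M.W q [ELabel.lab ℓ] q'}

/-- An LTS is utrace-closed when every trace over `(L^δ)*` that it can
perform is a utrace. -/
def UtraceClosed (M : LTS Q Lab) : Prop :=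
  ∀ σ : List (ELabel Lab), TraceIn M.L σ → (∃ q', M.W M.q0 σ q') → σ ∈ M.Utraces

end LTS

/-- `i uioco s`. -/
def Uioco {Qi Qs Lab : Type} (i : LTS Qi Lab) (s : LTS Qs Lab) : Prop :=
  ∀ σ ∈ s.Utraces, i.outSet (i.after σ) ⊆ s.outSet (s.after σ)

/-- Composability: disjoint output label sets. -/
def Composable {Qs Qe Lab : Type} (s : LTS Qs Lab) (e : LTS Qe Lab) : Prop :=
  s.U ∩ e.U = ∅

/-- Parallel composition `s ∥ e`. -/
def par {Qs Qe Lab : Type} (s : LTS Qs Lab) (e : LTS Qe Lab) : LTS (Qs × Qe) Lab where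
  I := (s.I \ e.U) ∪ (e.I \ s.U)
  U := s.U ∪ e.U
  T := fun p a p' =>
    match a with
    | none =>
        (s.T p.1 none p'.1 ∧ p'.2 = p.2) ∨ (e.T p.2 none p'.2 ∧ p'.1 = p.1)
    | some ℓ =>
        (ℓ ∈ s.L ∧ ℓ ∉ e.L ∧ s.T p.1 (some ℓ) p'.1 ∧ p'.2 = p.2) ∨
        (ℓ ∈ e.L ∧ ℓ ∉ s.L ∧ e.T p.2 (some ℓ) p'.2 ∧ p'.1 = p.1) ∨
        (ℓ ∈ s.L ∧ ℓ ∈ e.L ∧ s.T p.1 (some ℓ) p'.1 ∧ e.T p.2 (some ℓ) p'.2)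
  q0 := (s.q0, e.q0)

/-- `s accepts e`: along utraces of `s ∥ e`, every output of `e` that is an
input of `s` is (weakly) enabled in `s`. -/
def Accepts {Qs Qe Lab : Type} (s : LTS Qs Lab) (e : LTS Qe Lab) : Prop :=
  ∀ σ ∈ (par s e).Utraces, ∀ qs qe, (par s e).W (par s e).q0 σ (qs, qe) →
    ∀ ℓ, ELabel.lab ℓ ∈ e.outq qe → ℓ ∈ s.I → ℓ ∈ s.inq qs

/-- `s mutually accepts e`. -/
def MutuallyAccepts {Qs Qe Lab : Type} (s : LTS Qs Lab) (e : LTS Qe Lab) : Prop :=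
  Accepts s e ∧ Accepts e s

/-- `R` is an ecosim for `s` and `e`. -/
def IsEcosim {Qs Qe Lab : Type} (s : LTS Qs Lab) (e : LTS Qe Lab)
    (R : Set (Set Qs × Set Qe)) : Prop :=
  (s.after [], e.after []) ∈ R ∧
  ∀ Xs Xe, (Xs, Xe) ∈ R →
    (∀ ℓ, ELabel.lab ℓ ∈ e.outSet Xe → ℓ ∈ s.I →
      ℓ ∈ s.inSet Xs ∧
        (s.afterSet Xs [ELabel.lab ℓ], e.afterSet Xe [ELabel.lab ℓ]) ∈ R) ∧
    (∀ ℓ, ELabel.lab ℓ ∈ s.outSet Xs → ℓ ∈ e.I →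
      ℓ ∈ e.inSet Xe ∧
        (s.afterSet Xs [ELabel.lab ℓ], e.afterSet Xe [ELabel.lab ℓ]) ∈ R) ∧
    (∀ ℓ, (ELabel.lab ℓ ∈ e.outSet Xe ∨ ℓ ∈ e.inSet Xe) → ℓ ∉ s.L →
      (Xs, e.afterSet Xe [ELabel.lab ℓ]) ∈ R) ∧
    (∀ ℓ, (ELabel.lab ℓ ∈ s.outSet Xs ∨ ℓ ∈ s.inSet Xs) → ℓ ∉ e.L →
      (s.afterSet Xs [ELabel.lab ℓ], Xe) ∈ R) ∧
    (∀ ℓ, ℓ ∈ s.inSet Xs → ℓ ∈ e.inSet Xe →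
      (s.afterSet Xs [ELabel.lab ℓ], e.afterSet Xe [ELabel.lab ℓ]) ∈ R) ∧
    (ELabel.delta ∈ s.outSet Xs → ELabel.delta ∈ e.outSet Xe →
      (s.afterSet Xs [ELabel.delta], e.afterSet Xe [ELabel.delta]) ∈ R)

/-- `s eco e`: there exists an ecosim for `s` and `e`. -/
def Eco {Qs Qe Lab : Type} (s : LTS Qs Lab) (e : LTS Qe Lab) : Prop :=
  ∃ R, IsEcosim s e R

/-- `R_U(s,e)`: the smallest relation closed under the given rules. -/
inductive RU {Qs Qe Lab : Type} (s : LTS Qs Lab) (e : LTS Qe Lab) :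
    Set Qs → Set Qe → Prop
  | base : RU s e (s.after []) (e.after [])
  | syncOutE {Xs : Set Qs} {Xe : Set Qe} (ℓ : Lab) :
      RU s e Xs Xe → ELabel.lab ℓ ∈ e.outSet Xe → ℓ ∈ s.I →
      RU s e (s.afterSet Xs [ELabel.lab ℓ]) (e.afterSet Xe [ELabel.lab ℓ])
  | syncOutS {Xs : Set Qs} {Xe : Set Qe} (ℓ : Lab) :
      RU s e Xs Xe → ELabel.lab ℓ ∈ s.outSet Xs → ℓ ∈ e.I →
      RU s e (s.afterSet Xs [ELabel.lab ℓ]) (e.afterSet Xe [ELabel.lab ℓ])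
  | internalE {Xs : Set Qs} {Xe : Set Qe} (ℓ : Lab) :
      RU s e Xs Xe → (ELabel.lab ℓ ∈ e.outSet Xe ∨ ℓ ∈ e.inSet Xe) → ℓ ∉ s.L →
      RU s e Xs (e.afterSet Xe [ELabel.lab ℓ])
  | internalS {Xs : Set Qs} {Xe : Set Qe} (ℓ : Lab) :
      RU s e Xs Xe → (ELabel.lab ℓ ∈ s.outSet Xs ∨ ℓ ∈ s.inSet Xs) → ℓ ∉ e.L →
      RU s e (s.afterSet Xs [ELabel.lab ℓ]) Xe
  | syncIn {Xs : Set Qs} {Xe : Set Qe} (ℓ : Lab) :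
      RU s e Xs Xe → ℓ ∈ s.inSet Xs → ℓ ∈ e.inSet Xe →
      RU s e (s.afterSet Xs [ELabel.lab ℓ]) (e.afterSet Xe [ELabel.lab ℓ])
  | qdelta {Xs : Set Qs} {Xe : Set Qe} :
      RU s e Xs Xe → ELabel.delta ∈ s.outSet Xs → ELabel.delta ∈ e.outSet Xe →
      RU s e (s.afterSet Xs [ELabel.delta]) (e.afterSet Xe [ELabel.delta])

open Classical in
/-- Projection `σ↾𝓛^δ` of a trace onto an (extended) label set: keeps `δ`
and the labels in `Ls`, removes all other labels. -/
noncomputable def projD {Lab : Type} (σ : List (ELabel Lab)) (Ls : Set Lab) :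
    List (ELabel Lab) :=
  σ.filter fun x => decide (ELabel.inL Ls x)

open Classical in
/-- Projection `σ↾𝓛` of a trace of plain labels onto a label set. -/
noncomputable def projL {Lab : Type} (σ : List Lab) (Ls : Set Lab) : List Lab :=
  σ.filter fun ℓ => decide (ℓ ∈ Ls)

open Classical in
/-- Substitution `σ[θ/δ]` of the label `θ` by the quiescence label `δ`. -/
noncomputable def substTheta {Lab : Type} (θ : Lab) (σ : List Lab) :
    List (ELabel Lab) :=
  σ.map fun ℓ => if ℓ = θ then ELabel.delta else ELabel.lab ℓ

/-- `⟨X⟩`: componentwise collection of a set of pairs of states. -/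
def collect {Qs Qe : Type} (X : Set (Qs × Qe)) : Set Qs × Set Qe :=
  (Prod.fst '' X, Prod.snd '' X)

/-- `q_s accepts q_e over σ`. -/
def AcceptsOver {Qs Qe Lab : Type} (s : LTS Qs Lab) (e : LTS Qe Lab)
    (qs : Qs) (qe : Qe) (σ : List (ELabel Lab)) : Prop :=
  ∀ σ1 σ2 : List (ELabel Lab), σ1 ++ σ2 = σ →
    ∀ (qs' : Qs) (qe' : Qe), (par s e).W (qs, qe) σ1 (qs', qe') →
      ∀ ℓ, ELabel.lab ℓ ∈ e.outq qe' → ℓ ∈ s.I → ℓ ∈ s.inq qs' ∧ ℓ ∈ e.U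

/-- `q_s mutually accepts q_e over σ`. -/
def MutuallyAcceptsOver {Qs Qe Lab : Type} (s : LTS Qs Lab) (e : LTS Qe Lab)
    (qs : Qs) (qe : Qe) (σ : List (ELabel Lab)) : Prop :=
  AcceptsOver s e qs qe σ ∧ AcceptsOver e s qe qs σ

/-- A test case: a quasi-finite tree-shaped LTS without `τ`-transitions, with
terminal states `pass` and `fail` carrying input self-loops, a special
quiescence-observation input `θ`, at most one output transition per state,
and receptive to all inputs other than `θ`. -/
structure TestCase (Qt Lab : Type) extends LTS Qt Lab where
  passS : Qt
  failS : Qt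
  theta : Lab
  theta_input : theta ∈ I
  no_tau : ∀ q q', ¬ T q none q'
  tree : ∀ q, q ≠ q0 → q ≠ passS → q ≠ failS →
    ∃! p : Qt × Option Lab, T p.1 p.2 q
  pass_loops : ∀ ℓ ∈ I, T passS (some ℓ) passS
  pass_terminal : ∀ a q', T passS a q' → q' = passS ∧ ∃ ℓ ∈ I, a = some ℓ
  fail_loops : ∀ ℓ ∈ I, T failS (some ℓ) failS
  fail_terminal : ∀ a q', T failS a q' → q' = failS ∧ ∃ ℓ ∈ I, a = some ℓ
  one_output : ∀ q ℓ ℓ' q' q'', ℓ ∈ U → ℓ' ∈ U →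
    T q (some ℓ) q' → T q (some ℓ') q'' → ℓ = ℓ' ∧ q' = q''
  receptive : ∀ q, ∀ ℓ ∈ I, ℓ ≠ theta → ∃ q', T q (some ℓ) q'

/-- Test execution `t ⫿ i` of a test case `t` with an implementation `i`. -/
def testExec {Qt Qi Lab : Type} (t : TestCase Qt Lab) (i : LTS Qi Lab) :
    LTS (Qt × Qi) Lab where
  I := ∅
  U := i.U ∪ (t.toLTS.L \ {t.theta})
  T := fun p a p' =>
    match a with
    | none => i.T p.2 none p'.2 ∧ p'.1 = p.1
    | some ℓ =>
        (ℓ ∈ i.L ∧ ℓ ∉ t.toLTS.L ∧ i.T p.2 (some ℓ) p'.2 ∧ p'.1 = p.1) ∨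
        (ℓ ∈ t.toLTS.L ∧ ℓ ∉ i.L ∧ ℓ ≠ t.theta ∧ t.T p.1 (some ℓ) p'.1 ∧ p'.2 = p.2) ∨
        (ℓ ∈ i.L ∧ ℓ ∈ t.toLTS.L ∧ t.T p.1 (some ℓ) p'.1 ∧ i.T p.2 (some ℓ) p'.2) ∨
        (ℓ = t.theta ∧ t.T p.1 (some ℓ) p'.1 ∧ p'.2 = p.2 ∧ i.Quiescent p.2)
  q0 := (t.q0, i.q0)

/-!
A component takes part in a step of `s ∥ e` labelled `x` by performing `x` if `x` belongs to its own
alphabet (which always contains `δ`) and by staying put otherwise.  For `x = δ` this is only right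
when each component accepts the outputs of the other, for otherwise `s ∥ e` may be quiescent because
an output is blocked.  Hence, along traces on which the components mutually accept each other, the
states `s ∥ e` can reach are exactly the pairs of states that `s` and `e` can reach by the projected
traces, and the outputs of `s ∥ e` are determined by those of `s` and `e`.  This applies to the
implementations, which accept everything, and to the specifications along utraces of `s ∥ e`, whose
projections are again utraces, so the two instances of `uioco` can be used componentwise.
-/

namespace LTS

variable {Q Lab : Type} {M : LTS Q Lab} {q q' r : Q} {σ ρ : List (ELabel Lab)} {x : ELabel Lab}

lemma w_nil_iff : M.W q [] q' ↔ M.Eps q q' := by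
  refine ⟨fun h => ?_, W.nil⟩
  generalize hσ : ([] : List (ELabel Lab)) = σ at h
  cases h with
  | nil h => exact h
  | snoc => simp at hσ

lemma w_append_singleton_iff :
    M.W q (σ ++ [x]) q' ↔ ∃ q₁ q₂, M.W q σ q₁ ∧ M.VStep q₁ x q₂ ∧ M.Eps q₂ q' := by
  refine ⟨fun h => ?_, fun ⟨_, _, hσ, hx, hτ⟩ => .snoc hσ hx hτ⟩
  generalize hρ : σ ++ [x] = ρ at h
  cases h with
  | nil => simp at hρ
  | snoc hσ hx hτ =>
    obtain ⟨rfl, rfl⟩ := List.append_singleton_inj.1 hρ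
    exact ⟨_, _, hσ, hx, hτ⟩

lemma w_singleton_iff :
    M.W q [x] q' ↔ ∃ q₁ q₂, M.Eps q q₁ ∧ M.VStep q₁ x q₂ ∧ M.Eps q₂ q' := by
  simpa only [List.nil_append, w_nil_iff] using w_append_singleton_iff (M := M) (σ := [])

lemma W.trans_eps (h : M.W q σ r) (hτ : M.Eps r q') : M.W q σ q' := by
  cases h with
  | nil h => exact .nil (h.trans hτ)
  | snoc hσ hx h => exact .snoc hσ hx (h.trans hτ)

lemma W.exists_of_append (h : M.W q (σ ++ ρ) q') : ∃ r, M.W q σ r ∧ M.W r ρ q' := by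
  induction ρ using List.reverseRecOn generalizing q' with
  | nil => exact ⟨q', by simpa only [List.append_nil] using h, .nil .refl⟩
  | append_singleton ρ x ih =>
    rw [← List.append_assoc, w_append_singleton_iff] at h
    obtain ⟨q₁, q₂, hσρ, hx, hτ⟩ := h
    obtain ⟨r, hσ, hρ⟩ := ih hσρ
    exact ⟨r, hσ, .snoc hρ hx hτ⟩

lemma mem_utraces_of_append_mem (h : σ ++ ρ ∈ M.Utraces) : σ ∈ M.Utraces := by
  obtain ⟨hL, ⟨q, hq⟩, hin⟩ := h
  obtain ⟨r, hr, -⟩ := hq.exists_of_append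
  refine ⟨fun x hx => hL x (List.mem_append_left ρ hx), ⟨r, hr⟩, ?_⟩
  rintro σ₁ ℓ σ₂ rfl
  exact hin σ₁ ℓ (σ₂ ++ ρ) (List.append_assoc ..)

lemma mem_outSet_after_iff :
    x ∈ M.outSet (M.after σ) ↔ ∃ q, M.W M.q0 σ q ∧ x ∈ M.outq q := by
  simp only [outSet, after, Set.mem_iUnion, Set.mem_ofPred_eq, exists_prop]

/-- The share of a component `M` in a step labelled `x` of a parallel composition: `M` performs `x`
if `x ∈ L^δ`, and does not move otherwise. -/
def LocalStep (M : LTS Q Lab) (q : Q) (x : ELabel Lab) (q' : Q) : Prop :=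
  (ELabel.inL M.L x → M.VStep q x q') ∧ (¬ ELabel.inL M.L x → q' = q)

lemma localStep_delta_iff : M.LocalStep q .delta q' ↔ q' = q ∧ M.Quiescent q := by
  simp [LocalStep, ELabel.inL, VStep]

lemma w_projD_append_singleton_iff :
    M.W q (projD (σ ++ [x]) M.L) q' ↔
      ∃ q₁ q₂, M.W q (projD σ M.L) q₁ ∧ M.LocalStep q₁ x q₂ ∧ M.Eps q₂ q' := by
  by_cases hx : ELabel.inL M.L x
  · have hproj : projD (σ ++ [x]) M.L = projD σ M.L ++ [x] := by simp [projD, hx]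
    simp only [hproj, w_append_singleton_iff, LocalStep, hx, true_imp_iff, not_true, false_imp_iff,
      and_true]
  · have hproj : projD (σ ++ [x]) M.L = projD σ M.L := by simp [projD, hx]
    simp only [hproj, LocalStep, hx, false_imp_iff, not_false_iff, true_imp_iff, true_and]
    refine ⟨fun h => ⟨q', q', h, rfl, .refl⟩, ?_⟩
    rintro ⟨q₁, _, hσ, rfl, hτ⟩
    exact hσ.trans_eps hτ

end LTS

section Projection

variable {Lab : Type} {S : Set Lab}

lemma traceIn_projD (σ : List (ELabel Lab)) : TraceIn S (projD σ S) :=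
  fun _ hx => by simpa only [decide_eq_true_eq] using (List.mem_filter.1 hx).2

lemma exists_append_cons_of_projD_eq {σ ρ₁ ρ₂ : List (ELabel Lab)} {x : ELabel Lab}
    (h : projD σ S = ρ₁ ++ x :: ρ₂) : ∃ σ₁ σ₂, σ = σ₁ ++ x :: σ₂ ∧ projD σ₁ S = ρ₁ := by
  obtain ⟨α, β, rfl, rfl, hβ⟩ := List.filter_eq_append_iff.1 h
  obtain ⟨γ, σ₂, rfl, hγ, -, -⟩ := List.filter_eq_cons_iff.1 hβ
  refine ⟨α ++ γ, σ₂, (List.append_assoc ..).symm, ?_⟩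
  rw [projD, List.filter_append, List.filter_eq_nil_iff.2 hγ, List.append_nil]

end Projection

section Parallel

variable {Qs Qe Lab : Type} {s : LTS Qs Lab} {e : LTS Qe Lab} {p p' : Qs × Qe} {qs qs' : Qs}
  {qe qe' : Qe} {σ ρ : List (ELabel Lab)} {x : ELabel Lab} {ℓ : Lab}

lemma par_L : (par s e).L = s.L ∪ e.L := by
  ext ℓ
  simp only [LTS.L, par, Set.mem_union, Set.mem_sdiff]
  tauto

lemma par_eps_iff : (par s e).Eps p p' ↔ s.Eps p.1 p'.1 ∧ e.Eps p.2 p'.2 := by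
  constructor
  · intro h
    induction h with
    | refl => exact ⟨.refl, .refl⟩
    | tail _ hτ ih =>
      rcases hτ with ⟨hs, he⟩ | ⟨he, hs⟩
      · exact ⟨ih.1.tail hs, he ▸ ih.2⟩
      · exact ⟨hs ▸ ih.1, ih.2.tail he⟩
  · rintro ⟨hs, he⟩
    have moveLeft : (par s e).Eps (p.1, p.2) (p'.1, p.2) :=
      hs.lift (·, p.2) fun _ _ h => Or.inl ⟨h, rfl⟩
    have moveRight : (par s e).Eps (p'.1, p.2) (p'.1, p'.2) :=
      he.lift (p'.1, ·) fun _ _ h => Or.inr ⟨h, rfl⟩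
    exact moveLeft.trans moveRight

lemma par_T_some_iff (hℓ : ℓ ∈ (par s e).L) :
    (par s e).T p (some ℓ) p' ↔
      s.LocalStep p.1 (.lab ℓ) p'.1 ∧ e.LocalStep p.2 (.lab ℓ) p'.2 := by
  rw [par_L] at hℓ
  by_cases hs : ℓ ∈ s.L <;> by_cases he : ℓ ∈ e.L
  · simp [par, LTS.LocalStep, LTS.VStep, ELabel.inL, hs, he]
  · simp [par, LTS.LocalStep, LTS.VStep, ELabel.inL, hs, he]
  · simp [par, LTS.LocalStep, LTS.VStep, ELabel.inL, hs, he, and_comm]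
  · exact absurd hℓ (by simp [hs, he])

lemma par_T_fst (hℓ : ℓ ∈ s.L) (h : (par s e).T p (some ℓ) p') : s.T p.1 (some ℓ) p'.1 :=
  ((par_T_some_iff (par_L ▸ Or.inl hℓ)).1 h).1.1 hℓ

lemma par_T_snd (hℓ : ℓ ∈ e.L) (h : (par s e).T p (some ℓ) p') : e.T p.2 (some ℓ) p'.2 :=
  ((par_T_some_iff (par_L ▸ Or.inr hℓ)).1 h).2.1 hℓ

lemma par_w_singleton_fst (hℓ : ℓ ∈ s.L) (h : (par s e).W p [.lab ℓ] p') :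
    s.W p.1 [.lab ℓ] p'.1 := by
  obtain ⟨p₁, p₂, hτ₁, hT, hτ₂⟩ := LTS.w_singleton_iff.1 h
  exact LTS.w_singleton_iff.2
    ⟨p₁.1, p₂.1, (par_eps_iff.1 hτ₁).1, par_T_fst hℓ hT, (par_eps_iff.1 hτ₂).1⟩

lemma par_T_swap {a : Option Lab} (h : (par s e).T p a p') : (par e s).T p.swap a p'.swap := by
  cases a with
  | none => exact Or.symm h
  | some ℓ =>
    rcases h with h | h | ⟨hs, he, hTs, hTe⟩
    · exact Or.inr (Or.inl h)
    · exact Or.inl h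
    · exact Or.inr (Or.inr ⟨he, hs, hTe, hTs⟩)

lemma par_quiescent_swap (h : (par s e).Quiescent p) : (par e s).Quiescent p.swap :=
  ⟨fun x hx p' hT => h.1 x (Or.symm hx) p'.swap (par_T_swap hT),
    fun p' hτ => h.2 p'.swap (par_T_swap hτ)⟩

lemma par_vStep_swap (h : (par s e).VStep p x p') : (par e s).VStep p.swap x p'.swap := by
  cases x with
  | lab ℓ => exact par_T_swap h
  | delta => exact ⟨congrArg Prod.swap h.1, par_quiescent_swap h.2⟩

lemma par_w_swap (h : (par s e).W p σ p') : (par e s).W p.swap σ p'.swap := by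
  induction h with
  | nil hτ => exact .nil (par_eps_iff.2 (par_eps_iff.1 hτ).symm)
  | snoc _ hx hτ ih =>
    exact .snoc ih (par_vStep_swap hx) (par_eps_iff.2 (par_eps_iff.1 hτ).symm)

lemma par_utraces_swap (h : σ ∈ (par s e).Utraces) : σ ∈ (par e s).Utraces := by
  obtain ⟨hL, ⟨p, hp⟩, hin⟩ := h
  refine ⟨?_, ⟨p.swap, par_w_swap hp⟩, fun σ₁ ℓ σ₂ hσ hℓ q hq => ?_⟩
  · rwa [par_L, Set.union_comm, ← par_L]
  · obtain ⟨r, hr⟩ := hin σ₁ ℓ σ₂ hσ (Or.symm hℓ) q.swap (par_w_swap hq)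
    exact ⟨r.swap, par_w_swap hr⟩

lemma Composable.symm (h : Composable s e) : Composable e s :=
  (Set.inter_comm ..).trans h

lemma Composable.notMem_right (h : Composable s e) (hs : ℓ ∈ s.U) : ℓ ∉ e.U :=
  fun he => Set.notMem_empty ℓ (h ▸ ⟨hs, he⟩)

/-- The state `qs` of `s` accepts the state `qe` of `e`: every output of `qe` that is an input of
`s` is weakly enabled in `qs`.  It is the pointwise condition behind `Accepts` and `AcceptsOver`. -/
def AcceptsAt (s : LTS Qs Lab) (e : LTS Qe Lab) (qs : Qs) (qe : Qe) : Prop :=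
  ∀ ℓ, ELabel.lab ℓ ∈ e.outq qe → ℓ ∈ s.I → ℓ ∈ s.inq qs

lemma AcceptsAt.exists_eps_mem_outq_par (hcomp : Composable s e) (hacc : AcceptsAt e s qe qs)
    (hℓ : ELabel.lab ℓ ∈ s.outq qs) :
    ∃ qe', e.Eps qe qe' ∧ ELabel.lab ℓ ∈ (par s e).outq (qs, qe') := by
  have ⟨hU, qs', hT⟩ := hℓ
  by_cases he : ℓ ∈ e.L
  · have hI : ℓ ∈ e.I := he.resolve_right (hcomp.notMem_right hU)
    obtain ⟨-, qe'', hin⟩ := hacc ℓ hℓ hI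
    obtain ⟨qe₁, qe₂, hτ, hTe, -⟩ := LTS.w_singleton_iff.1 hin
    exact ⟨qe₁, hτ, Or.inl hU, (qs', qe₂), Or.inr (Or.inr ⟨Or.inr hU, he, hT, hTe⟩)⟩
  · exact ⟨qe, .refl, Or.inl hU, (qs', qe), Or.inl ⟨Or.inr hU, he, hT, rfl⟩⟩

lemma AcceptsAt.quiescent_fst (hcomp : Composable s e) (hacc : AcceptsAt e s qe qs)
    (h : (par s e).Quiescent (qs, qe)) : s.Quiescent qs := by
  refine ⟨fun ℓ hℓ qs' hT => ?_, fun qs' hτ => h.2 (qs', qe) (Or.inl ⟨hτ, rfl⟩)⟩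
  obtain ⟨qe', hτ, hU, p', hT'⟩ := hacc.exists_eps_mem_outq_par hcomp ⟨hℓ, qs', hT⟩
  rcases hτ.cases_head with rfl | ⟨qe₁, hτ₁, -⟩
  · exact h.1 ℓ hU p' hT'
  · exact h.2 (qs, qe₁) (Or.inr ⟨hτ₁, rfl⟩)

lemma LTS.Quiescent.par (hs : s.Quiescent p.1) (he : e.Quiescent p.2) :
    (par s e).Quiescent p := by
  refine ⟨fun ℓ hℓ p' hT => ?_, fun p' hτ => ?_⟩
  · rcases hℓ with hU | hU
    · exact hs.1 ℓ hU _ (par_T_fst (Or.inr hU) hT)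
    · exact he.1 ℓ hU _ (par_T_snd (Or.inr hU) hT)
  · rcases hτ with ⟨hτ, -⟩ | ⟨hτ, -⟩
    · exact hs.2 _ hτ
    · exact he.2 _ hτ

lemma par_quiescent_iff (hcomp : Composable s e) (hse : AcceptsAt s e qs qe)
    (hes : AcceptsAt e s qe qs) :
    (par s e).Quiescent (qs, qe) ↔ s.Quiescent qs ∧ e.Quiescent qe :=
  ⟨fun h => ⟨hes.quiescent_fst hcomp h, hse.quiescent_fst hcomp.symm (par_quiescent_swap h)⟩,
    fun h => h.1.par h.2⟩

lemma par_vStep_iff (hcomp : Composable s e) (hx : ELabel.inL (par s e).L x)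
    (hse : AcceptsAt s e qs qe) (hes : AcceptsAt e s qe qs) :
    (par s e).VStep (qs, qe) x (qs', qe') ↔ s.LocalStep qs x qs' ∧ e.LocalStep qe x qe' := by
  cases x with
  | lab ℓ => exact par_T_some_iff hx
  | delta =>
    simp only [LTS.VStep, LTS.localStep_delta_iff, par_quiescent_iff hcomp hse hes,
      Prod.mk.injEq]
    tauto

lemma AcceptsOver.of_append (h : AcceptsOver s e qs qe (σ ++ ρ)) : AcceptsOver s e qs qe σ :=
  fun σ₁ σ₂ hσ => h σ₁ (σ₂ ++ ρ) (by rw [← List.append_assoc, hσ])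

lemma AcceptsOver.acceptsAt (h : AcceptsOver s e qs qe σ)
    (hσ : (par s e).W (qs, qe) σ (qs', qe')) : AcceptsAt s e qs' qe' :=
  fun ℓ hout hI => (h σ [] (List.append_nil σ) qs' qe' hσ ℓ hout hI).1

lemma LTS.InputEnabled.acceptsOver (h : s.InputEnabled) : AcceptsOver s e qs qe σ :=
  fun _ _ _ qs' _ _ ℓ hout hI => ⟨⟨hI, h qs' ℓ hI⟩, hout.1⟩

lemma Accepts.acceptsOver (h : Accepts s e) (hσ : σ ∈ (par s e).Utraces) :
    AcceptsOver s e s.q0 e.q0 σ := by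
  rintro σ₁ σ₂ rfl qs qe hw ℓ hout hI
  exact ⟨h σ₁ (LTS.mem_utraces_of_append_mem hσ) qs qe hw ℓ hout hI, hout.1⟩

lemma MutuallyAccepts.symm (h : MutuallyAccepts s e) : MutuallyAccepts e s :=
  And.symm h

lemma MutuallyAccepts.mutuallyAcceptsOver (h : MutuallyAccepts s e)
    (hσ : σ ∈ (par s e).Utraces) : MutuallyAcceptsOver s e s.q0 e.q0 σ :=
  ⟨h.1.acceptsOver hσ, h.2.acceptsOver (par_utraces_swap hσ)⟩

lemma par_w_iff (hcomp : Composable s e) (hL : TraceIn (par s e).L σ)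
    (hacc : MutuallyAcceptsOver s e qs qe σ) :
    (par s e).W (qs, qe) σ (qs', qe') ↔
      s.W qs (projD σ s.L) qs' ∧ e.W qe (projD σ e.L) qe' := by
  induction σ using List.reverseRecOn generalizing qs' qe' with
  | nil => simp only [projD, List.filter_nil, LTS.w_nil_iff, par_eps_iff]
  | append_singleton σ x ih =>
    have hx : ELabel.inL (par s e).L x := hL x (List.mem_append_right σ (List.mem_singleton_self x))
    have haccσ : MutuallyAcceptsOver s e qs qe σ := ⟨hacc.1.of_append, hacc.2.of_append⟩
    have ih {a b} := @ih a b (fun y hy => hL y (List.mem_append_left [x] hy)) haccσ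
    have step {a b a' b'} (hab : (par s e).W (qs, qe) σ (a, b)) :
        (par s e).VStep (a, b) x (a', b') ↔ s.LocalStep a x a' ∧ e.LocalStep b x b' :=
      par_vStep_iff hcomp hx (haccσ.1.acceptsAt hab) (haccσ.2.acceptsAt (par_w_swap hab))
    rw [LTS.w_append_singleton_iff, LTS.w_projD_append_singleton_iff,
      LTS.w_projD_append_singleton_iff]
    constructor
    · rintro ⟨⟨a, b⟩, ⟨a', b'⟩, hab, hstep, hτ⟩
      have ⟨hs, he⟩ := ih.1 hab
      have ⟨hsx, hex⟩ := (step hab).1 hstep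
      have ⟨hsτ, heτ⟩ := par_eps_iff.1 hτ
      exact ⟨⟨a, a', hs, hsx, hsτ⟩, ⟨b, b', he, hex, heτ⟩⟩
    · rintro ⟨⟨a, a', hs, hsx, hsτ⟩, ⟨b, b', he, hex, heτ⟩⟩
      have hab := ih.2 ⟨hs, he⟩
      exact ⟨(a, b), (a', b'), hab, (step hab).2 ⟨hsx, hex⟩, par_eps_iff.2 ⟨hsτ, heτ⟩⟩

lemma delta_mem_outSet_par_iff (hcomp : Composable s e) (hL : TraceIn (par s e).L σ)
    (hacc : MutuallyAcceptsOver s e s.q0 e.q0 σ) :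
    .delta ∈ (par s e).outSet ((par s e).after σ) ↔
      .delta ∈ s.outSet (s.after (projD σ s.L)) ∧ .delta ∈ e.outSet (e.after (projD σ e.L)) := by
  simp only [LTS.mem_outSet_after_iff]
  constructor
  · rintro ⟨⟨qs, qe⟩, hw, hq⟩
    have ⟨hs, he⟩ := (par_w_iff hcomp hL hacc).1 hw
    have ⟨hqs, hqe⟩ := (par_quiescent_iff hcomp (hacc.1.acceptsAt hw)
      (hacc.2.acceptsAt (par_w_swap hw))).1 hq
    exact ⟨⟨qs, hs, hqs⟩, ⟨qe, he, hqe⟩⟩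
  · rintro ⟨⟨qs, hs, hqs⟩, ⟨qe, he, hqe⟩⟩
    exact ⟨(qs, qe), (par_w_iff hcomp hL hacc).2 ⟨hs, he⟩, LTS.Quiescent.par hqs hqe⟩

lemma lab_mem_outSet_par_iff (hcomp : Composable s e) (hL : TraceIn (par s e).L σ)
    (hacc : MutuallyAcceptsOver s e s.q0 e.q0 σ) (hne : ∃ p, (par s e).W (par s e).q0 σ p) :
    .lab ℓ ∈ (par s e).outSet ((par s e).after σ) ↔
      .lab ℓ ∈ s.outSet (s.after (projD σ s.L)) ∨ .lab ℓ ∈ e.outSet (e.after (projD σ e.L)) := by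
  have w_iff {qs qe} := par_w_iff (qs' := qs) (qe' := qe) hcomp hL hacc
  obtain ⟨⟨rs, re⟩, hr⟩ := hne
  obtain ⟨hrs, hre⟩ := w_iff.1 hr
  simp only [LTS.mem_outSet_after_iff]
  constructor
  · rintro ⟨p, hw, hU | hU, p', hT⟩
    · exact Or.inl ⟨p.1, (w_iff.1 hw).1, hU, p'.1, par_T_fst (Or.inr hU) hT⟩
    · exact Or.inr ⟨p.2, (w_iff.1 hw).2, hU, p'.2, par_T_snd (Or.inr hU) hT⟩
  · rintro (⟨qs, hs, hout⟩ | ⟨qe, he, hout⟩)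
    · have hw := w_iff.2 ⟨hs, hre⟩
      obtain ⟨qe, hτ, hout'⟩ :=
        (hacc.2.acceptsAt (par_w_swap hw)).exists_eps_mem_outq_par hcomp hout
      exact ⟨(qs, qe), hw.trans_eps (par_eps_iff.2 ⟨.refl, hτ⟩), hout'⟩
    · have hw := w_iff.2 ⟨hrs, he⟩
      obtain ⟨qs, hτ, hU, p', hT⟩ :=
        (hacc.1.acceptsAt hw).exists_eps_mem_outq_par hcomp.symm hout
      exact ⟨(qs, qe), hw.trans_eps (par_eps_iff.2 ⟨hτ, .refl⟩), Or.symm hU, p'.swap,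
        par_T_swap hT⟩

lemma MutuallyAccepts.exists_w_of_mem_utraces {σ₁ σ₂ : List (ELabel Lab)}
    (hma : MutuallyAccepts s e) (hcomp : Composable s e)
    (hσ : σ₁ ++ .lab ℓ :: σ₂ ∈ (par s e).Utraces) (hℓ : ℓ ∈ s.I)
    (hqs : s.W s.q0 (projD σ₁ s.L) qs) : ∃ qs', s.W qs [.lab ℓ] qs' := by
  have hσ₁ : σ₁ ∈ (par s e).Utraces := LTS.mem_utraces_of_append_mem hσ
  have w_iff {qs qe} :=
    par_w_iff (qs' := qs) (qe' := qe) hcomp hσ₁.1 (hma.mutuallyAcceptsOver hσ₁)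
  obtain ⟨u, v, hu, hT⟩ : ∃ u v, (par s e).W (par s e).q0 σ₁ u ∧ (par s e).T u (some ℓ) v := by
    obtain ⟨p, hp⟩ := hσ.2.1
    obtain ⟨r, hr, hrest⟩ := hp.exists_of_append
    obtain ⟨_, hℓr, -⟩ := LTS.W.exists_of_append (σ := [.lab ℓ]) hrest
    obtain ⟨u, v, hτ, hT, -⟩ := LTS.w_singleton_iff.1 hℓr
    exact ⟨u, v, hr.trans_eps hτ, hT⟩
  have hw : (par s e).W (par s e).q0 σ₁ (qs, u.2) := w_iff.2 ⟨hqs, (w_iff.1 hu).2⟩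
  by_cases hU : ℓ ∈ e.U
  · have hout : ELabel.lab ℓ ∈ e.outq u.2 := ⟨hU, v.2, par_T_snd (Or.inr hU) hT⟩
    exact (hma.1 σ₁ hσ₁ qs u.2 hw ℓ hout hℓ).2
  · obtain ⟨p', hp'⟩ := hσ.2.2 σ₁ ℓ σ₂ rfl (Or.inl ⟨hℓ, hU⟩) _ hw
    exact ⟨p'.1, par_w_singleton_fst (Or.inl hℓ) hp'⟩

lemma MutuallyAccepts.projD_fst_mem_utraces (hma : MutuallyAccepts s e) (hcomp : Composable s e)
    (hσ : σ ∈ (par s e).Utraces) : projD σ s.L ∈ s.Utraces := by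
  obtain ⟨p, hp⟩ := hσ.2.1
  have ⟨hs, _⟩ := (par_w_iff hcomp hσ.1 (hma.mutuallyAcceptsOver hσ)).1 hp
  refine ⟨traceIn_projD σ, ⟨p.1, hs⟩, fun ρ₁ ℓ ρ₂ hρ hℓ qs hqs => ?_⟩
  obtain ⟨σ₁, σ₂, rfl, rfl⟩ := exists_append_cons_of_projD_eq hρ
  exact hma.exists_w_of_mem_utraces hcomp hσ hℓ hqs

end Parallel

theorem compositional_testing_mutually_accepts_general
    {Qs Qe Qis Qie Lab : Type}
    (s : LTS Qs Lab) (e : LTS Qe Lab) (iS : LTS Qis Lab) (iE : LTS Qie Lab)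
    (hcomp : Composable s e)
    (hiSenabled : iS.InputEnabled) (hiEenabled : iE.InputEnabled)
    (hI1 : iS.I = s.I) (hU1 : iS.U = s.U)
    (hI2 : iE.I = e.I) (hU2 : iE.U = e.U)
    (hma : MutuallyAccepts s e)
    (huioco1 : Uioco iS s) (huioco2 : Uioco iE e) :
    Uioco (par iS iE) (par s e) := by
  intro σ hσ
  have hLs : iS.L = s.L := by rw [LTS.L, LTS.L, hI1, hU1]
  have hLe : iE.L = e.L := by rw [LTS.L, LTS.L, hI2, hU2]
  have hcompI : Composable iS iE := by rwa [Composable, hU1, hU2]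
  have hLI : TraceIn (par iS iE).L σ := by rw [par_L, hLs, hLe, ← par_L]; exact hσ.1
  have hacc : MutuallyAcceptsOver s e s.q0 e.q0 σ := hma.mutuallyAcceptsOver hσ
  have haccI : MutuallyAcceptsOver iS iE iS.q0 iE.q0 σ :=
    ⟨hiSenabled.acceptsOver, hiEenabled.acceptsOver⟩
  have houtS := huioco1 _ (hma.projD_fst_mem_utraces hcomp hσ)
  have houtE := huioco2 _ (hma.symm.projD_fst_mem_utraces hcomp.symm (par_utraces_swap hσ))
  rw [← hLs] at houtS
  rw [← hLe] at houtE
  rintro (ℓ | _) hx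
  · obtain ⟨p, hp, -⟩ := LTS.mem_outSet_after_iff.1 hx
    have hxI := (lab_mem_outSet_par_iff hcompI hLI haccI ⟨p, hp⟩).1 hx
    rw [lab_mem_outSet_par_iff hcomp hσ.1 hacc hσ.2.1, ← hLs, ← hLe]
    exact hxI.imp (@houtS _) (@houtE _)
  · have hxI := (delta_mem_outSet_par_iff hcompI hLI haccI).1 hx
    rw [delta_mem_outSet_par_iff hcomp hσ.1 hacc, ← hLs, ← hLe]
    exact hxI.imp (@houtS _) (@houtE _)

/-- if `s` mutually accepts `e`, `i_s uioco s` and `i_e uioco e`,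
then `i_s ∥ i_e uioco s ∥ e`. -/
theorem compositional_testing_mutually_accepts
    {Qs Qe Qis Qie Lab : Type}
    (s : LTS Qs Lab) (e : LTS Qe Lab) (iS : LTS Qis Lab) (iE : LTS Qie Lab)
    (hs : s.WellFormed) (he : e.WellFormed)
    (hiS : iS.WellFormed) (hiE : iE.WellFormed)
    (hcomp : Composable s e)
    (hiSenabled : iS.InputEnabled) (hiEenabled : iE.InputEnabled)
    (hI1 : iS.I = s.I) (hU1 : iS.U = s.U)
    (hI2 : iE.I = e.I) (hU2 : iE.U = e.U)
    (hma : MutuallyAccepts s e)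
    (huioco1 : Uioco iS s) (huioco2 : Uioco iE e) :
    Uioco (par iS iE) (par s e) :=
  compositional_testing_mutually_accepts_general s e iS iE hcomp hiSenabled hiEenabled
    hI1 hU1 hI2 hU2 hma huioco1 huioco2
end

section
/- Let s and e be labelled transition systems. Then s eco e if and only if R_U(s,e) is an ecosim for s and e. -/
/-!
An ecosim is a relation that is closed under the rules generating `R_U` and all of whose pairs
accept each other's outputs. Acceptance constrains only the pairs present in the relation, so it
passes to every subrelation; and `R_U`, being the least closed relation, is contained in every
ecosim.
-/

section Ecosim

variable {Qs Qe Lab : Type} {s : LTS Qs Lab} {e : LTS Qe Lab} {R R' : Set (Set Qs × Set Qe)}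

/-- Closure of a relation under the rules that generate `R_U(s,e)`: the part of being an ecosim
that forces pairs into the relation. The fields are named after the constructors of `RU`. -/
structure IsEcoClosed (s : LTS Qs Lab) (e : LTS Qe Lab) (R : Set (Set Qs × Set Qe)) : Prop where
  base : (s.after [], e.after []) ∈ R
  syncOutE {Xs Xe} (ℓ : Lab) : (Xs, Xe) ∈ R → ELabel.lab ℓ ∈ e.outSet Xe → ℓ ∈ s.I →
    (s.afterSet Xs [ELabel.lab ℓ], e.afterSet Xe [ELabel.lab ℓ]) ∈ R
  syncOutS {Xs Xe} (ℓ : Lab) : (Xs, Xe) ∈ R → ELabel.lab ℓ ∈ s.outSet Xs → ℓ ∈ e.I →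
    (s.afterSet Xs [ELabel.lab ℓ], e.afterSet Xe [ELabel.lab ℓ]) ∈ R
  internalE {Xs Xe} (ℓ : Lab) : (Xs, Xe) ∈ R →
    (ELabel.lab ℓ ∈ e.outSet Xe ∨ ℓ ∈ e.inSet Xe) → ℓ ∉ s.L →
    (Xs, e.afterSet Xe [ELabel.lab ℓ]) ∈ R
  internalS {Xs Xe} (ℓ : Lab) : (Xs, Xe) ∈ R →
    (ELabel.lab ℓ ∈ s.outSet Xs ∨ ℓ ∈ s.inSet Xs) → ℓ ∉ e.L →
    (s.afterSet Xs [ELabel.lab ℓ], Xe) ∈ R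
  syncIn {Xs Xe} (ℓ : Lab) : (Xs, Xe) ∈ R → ℓ ∈ s.inSet Xs → ℓ ∈ e.inSet Xe →
    (s.afterSet Xs [ELabel.lab ℓ], e.afterSet Xe [ELabel.lab ℓ]) ∈ R
  qdelta {Xs Xe} : (Xs, Xe) ∈ R → ELabel.delta ∈ s.outSet Xs → ELabel.delta ∈ e.outSet Xe →
    (s.afterSet Xs [ELabel.delta], e.afterSet Xe [ELabel.delta]) ∈ R

/-- Set-level acceptance, `out(Xe) ∩ I_s ⊆ in(Xs)`: the part of being an ecosim that restricts
which pairs may occur in the relation. -/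
def AcceptsOutputs (s : LTS Qs Lab) (e : LTS Qe Lab) (Xs : Set Qs) (Xe : Set Qe) : Prop :=
  ∀ ℓ, ELabel.lab ℓ ∈ e.outSet Xe → ℓ ∈ s.I → ℓ ∈ s.inSet Xs

theorem IsEcosim.isEcoClosed (hR : IsEcosim s e R) : IsEcoClosed s e R where
  base := hR.1
  syncOutE ℓ hX hout hin :=
    have ⟨outE, _⟩ := hR.2 _ _ hX
    (outE ℓ hout hin).2
  syncOutS ℓ hX hout hin :=
    have ⟨_, outS, _⟩ := hR.2 _ _ hX
    (outS ℓ hout hin).2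
  internalE ℓ hX :=
    have ⟨_, _, internalE, _⟩ := hR.2 _ _ hX
    internalE ℓ
  internalS ℓ hX :=
    have ⟨_, _, _, internalS, _⟩ := hR.2 _ _ hX
    internalS ℓ
  syncIn ℓ hX :=
    have ⟨_, _, _, _, syncIn, _⟩ := hR.2 _ _ hX
    syncIn ℓ
  qdelta hX :=
    have ⟨_, _, _, _, _, qdelta⟩ := hR.2 _ _ hX
    qdelta

theorem IsEcosim.acceptsOutputs (hR : IsEcosim s e R) {Xs : Set Qs} {Xe : Set Qe}
    (hX : (Xs, Xe) ∈ R) : AcceptsOutputs s e Xs Xe ∧ AcceptsOutputs e s Xe Xs :=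
  have ⟨outE, outS, _⟩ := hR.2 Xs Xe hX
  ⟨fun ℓ hout hin => (outE ℓ hout hin).1, fun ℓ hout hin => (outS ℓ hout hin).1⟩

theorem isEcosim_iff_isEcoClosed_and_acceptsOutputs :
    IsEcosim s e R ↔ IsEcoClosed s e R ∧
      ∀ Xs Xe, (Xs, Xe) ∈ R → AcceptsOutputs s e Xs Xe ∧ AcceptsOutputs e s Xe Xs := by
  refine ⟨fun hR => ⟨hR.isEcoClosed, fun _ _ => hR.acceptsOutputs⟩, ?_⟩
  rintro ⟨closed, accepts⟩
  refine ⟨closed.base, fun Xs Xe hX => ?_⟩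
  obtain ⟨acceptsE, acceptsS⟩ := accepts Xs Xe hX
  exact ⟨fun ℓ hout hin => ⟨acceptsE ℓ hout hin, closed.syncOutE ℓ hX hout hin⟩,
    fun ℓ hout hin => ⟨acceptsS ℓ hout hin, closed.syncOutS ℓ hX hout hin⟩,
    fun ℓ => closed.internalE ℓ hX, fun ℓ => closed.internalS ℓ hX,
    fun ℓ => closed.syncIn ℓ hX, closed.qdelta hX⟩

theorem IsEcosim.of_isEcoClosed_of_subset (hR : IsEcosim s e R) (hR' : IsEcoClosed s e R')
    (hsub : R' ⊆ R) : IsEcosim s e R' :=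
  isEcosim_iff_isEcoClosed_and_acceptsOutputs.2
    ⟨hR', fun _ _ hX => hR.acceptsOutputs (hsub hX)⟩

theorem isEcoClosed_RU (s : LTS Qs Lab) (e : LTS Qe Lab) :
    IsEcoClosed s e {p | RU s e p.1 p.2} where
  base := .base
  syncOutE := .syncOutE
  syncOutS := .syncOutS
  internalE := .internalE
  internalS := .internalS
  syncIn := .syncIn
  qdelta := .qdelta

theorem IsEcoClosed.RU_subset (hR : IsEcoClosed s e R) : {p | RU s e p.1 p.2} ⊆ R := by
  rintro ⟨Xs, Xe⟩ (hX : RU s e Xs Xe)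
  induction hX with
  | base => exact hR.base
  | syncOutE ℓ _ hout hin ih => exact hR.syncOutE ℓ ih hout hin
  | syncOutS ℓ _ hout hin ih => exact hR.syncOutS ℓ ih hout hin
  | internalE ℓ _ henabled hnot ih => exact hR.internalE ℓ ih henabled hnot
  | internalS ℓ _ henabled hnot ih => exact hR.internalS ℓ ih henabled hnot
  | syncIn ℓ _ hinS hinE ih => exact hR.syncIn ℓ ih hinS hinE
  | qdelta _ hdeltaS hdeltaE ih => exact hR.qdelta ih hdeltaS hdeltaE

theorem eco_iff_RU_is_ecosim_general (s : LTS Qs Lab) (e : LTS Qe Lab) :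
    Eco s e ↔ IsEcosim s e {p | RU s e p.1 p.2} := by
  refine ⟨?_, fun hRU => ⟨_, hRU⟩⟩
  rintro ⟨R, hR⟩
  exact hR.of_isEcoClosed_of_subset (isEcoClosed_RU s e) hR.isEcoClosed.RU_subset

end Ecosim

/-- `s eco e` iff `R_U(s,e)` is an ecosim for `s` and `e`. -/
theorem eco_iff_RU_is_ecosim {Qs Qe Lab : Type} (s : LTS Qs Lab) (e : LTS Qe Lab)
    (hs : s.WellFormed) (he : e.WellFormed) :
    Eco s e ↔ IsEcosim s e {p | RU s e p.1 p.2} :=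
  eco_iff_RU_is_ecosim_general s e
end
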